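/- arXiv:2404.06959 — 2 statements merged into one kernel-verified Lean document; each statement's English description precedes it below -/
import Mathlib

section
/- Let P be a nonzero finite-dimensional unital C*-algebra, τ a faithful tracial state on P, and (λ_i) a right quasi-basis for τ. Then Σ_i λ_i λ_i* is a scalar multiple of the identity if and only if τ is the Markov trace for the inclusion ℂ ⊆ P with modulus dim_ℂ(P), i.e., τ(p)·dim_ℂ(P) = dim_ℂ(pP) for every minimal central projection p of P; and in that case Σ_i λ_i λ_i* = dim_ℂ(P)·1. -/
/-!
Put `w = ∑ λᵢ λᵢ*`. Expanding `x` in the quasi-basis writes right multiplication by `a` as the sum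
of the rank-one maps `x ↦ τ(x λᵢ) λᵢ* a`, so its trace is `τ(a w)`. Cyclicity of the trace of
endomorphisms then forces `w` to be central, and `dim (pP) = τ(p w)` for every central projection
`p`; in particular `dim P = τ(w)`.

If `w = c • 1`, these two formulas give `c = dim P` and `dim (pP) = τ(p) dim P`. Conversely, below
the spectral projection of `w` at a point `c` of its spectrum there is a minimal central projection
`p`, for which `dim (pP) = τ(p w) = c τ(p)`. The Markov condition says
`τ(p) dim P = dim (pP) ≠ 0`, hence `c = dim P`: the normal element `w` has spectrum `{dim P}`, so it
is a scalar.
-/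

/-- A minimal central projection of `P`. -/
def IsMinCentralProjection {P : Type*} [Ring P] [StarRing P] (p : P) : Prop :=
  p ≠ 0 ∧ p * p = p ∧ star p = p ∧ (∀ x : P, p * x = x * p) ∧
  ∀ q : P, q * q = q → star q = q → (∀ x : P, q * x = x * q) → q * p = q → q = 0 ∨ q = p

/-- `τ` is the Markov trace for the inclusion `ℂ ⊆ P` with modulus `dim_ℂ P`, i.e.
`τ(p)·dim_ℂ(P) = dim_ℂ(pP)` for every minimal central projection `p` of `P`. -/
def IsMarkovTrace {P : Type*} [NormedRing P] [StarRing P] [NormedAlgebra ℂ P]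
    (τ : P →ₗ[ℂ] ℂ) : Prop :=
  ∀ p : P, IsMinCentralProjection p →
    τ p * ((Module.finrank ℂ P : ℕ) : ℂ) =
      ((Module.finrank ℂ ↥(LinearMap.range (LinearMap.mulLeft ℂ p)) : ℕ) : ℂ)

section QuasiBasis

variable {R A ι : Type*} [CommRing R] [Ring A] [Algebra R A] [Fintype ι]

/-- The families `u` and `v` form a (right) quasi-basis for the functional `τ`. A family `l` in a
star-algebra is a right quasi-basis in the sense of the paper when this holds for `u = l` and
`v = fun i ↦ star (l i)`; the index of the quasi-basis is then `∑ i, u i * v i`. -/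
def IsQuasiBasis (τ : A →ₗ[R] R) (u v : ι → A) : Prop :=
  ∀ x, x = ∑ i, τ (x * u i) • v i

namespace IsQuasiBasis

variable {τ : A →ₗ[R] R} {u v : ι → A}

lemma moduleFinite (h : IsQuasiBasis τ u v) : Module.Finite R A := by
  have span_eq_top : Submodule.span R (Set.range v) = ⊤ := by
    refine Submodule.eq_top_iff'.mpr fun x ↦ ?_
    rw [h x]
    exact Submodule.sum_mem _ fun i _ ↦
      Submodule.smul_mem _ _ (Submodule.subset_span (Set.mem_range_self i))
  exact ⟨span_eq_top ▸ Submodule.fg_span (Set.finite_range v)⟩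

lemma eq_zero_of_forall_apply_mul_eq_zero (h : IsQuasiBasis τ u v) {x : A}
    (hx : ∀ y, τ (x * y) = 0) : x = 0 := by
  rw [h x]
  simp [hx]

lemma mulRight_eq_sum (h : IsQuasiBasis τ u v) (a : A) :
    LinearMap.mulRight R a = ∑ i, (τ ∘ₗ LinearMap.mulRight R (u i)).smulRight (v i * a) := by
  ext x
  calc x * a = (∑ i, τ (x * u i) • v i) * a := by rw [← h x]
    _ = _ := by simp [Finset.sum_mul]

variable [Module.Free R A]

lemma trace_mulRight (h : IsQuasiBasis τ u v) (hτ : ∀ x y, τ (x * y) = τ (y * x)) (a : A) :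
    LinearMap.trace R A (LinearMap.mulRight R a) = τ (a * ∑ i, u i * v i) := by
  have := h.moduleFinite
  calc LinearMap.trace R A (LinearMap.mulRight R a)
    _ = ∑ i, τ (v i * a * u i) := by simp [h.mulRight_eq_sum a]
    _ = ∑ i, τ (a * (u i * v i)) :=
        Finset.sum_congr rfl fun i _ ↦ by rw [mul_assoc, hτ, mul_assoc]
    _ = τ (a * ∑ i, u i * v i) := by rw [Finset.mul_sum, map_sum]

lemma index_mem_center (h : IsQuasiBasis τ u v) (hτ : ∀ x y, τ (x * y) = τ (y * x)) :
    ∑ i, u i * v i ∈ Set.center A := by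
  set w := ∑ i, u i * v i
  refine Semigroup.mem_center_iff.mpr fun x ↦ sub_eq_zero.mp ?_
  refine h.eq_zero_of_forall_apply_mul_eq_zero fun y ↦ ?_
  have left : τ (x * w * y) = LinearMap.trace R A (LinearMap.mulRight R (y * x)) := by
    rw [h.trace_mulRight hτ, hτ, mul_assoc y]
  have right : τ (w * x * y) = LinearMap.trace R A (LinearMap.mulRight R (x * y)) := by
    rw [h.trace_mulRight hτ, mul_assoc w, hτ]
  rw [sub_mul, map_sub, left, right, LinearMap.mulRight_mul, LinearMap.mulRight_mul, sub_eq_zero]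
  exact LinearMap.trace_mul_comm R _ _

lemma finrank_eq_apply_index (h : IsQuasiBasis τ u v) (hτ : ∀ x y, τ (x * y) = τ (y * x)) :
    (Module.finrank R A : R) = τ (∑ i, u i * v i) := by
  have := h.moduleFinite
  rw [← LinearMap.trace_id, ← LinearMap.mulRight_one, h.trace_mulRight hτ, one_mul]

end IsQuasiBasis

end QuasiBasis

section Field

variable {K A : Type*} [Field K] [Ring A] [Algebra K A]

lemma finrank_range_mulLeft_eq_trace [FiniteDimensional K A] {p : A} (hp : IsIdempotentElem p) :
    (Module.finrank K (LinearMap.range (LinearMap.mulLeft K p)) : K) =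
      LinearMap.trace K A (LinearMap.mulLeft K p) := by
  have mulLeft_idem : IsIdempotentElem (LinearMap.mulLeft K p) := by
    rw [IsIdempotentElem, Module.End.mul_eq_comp, ← LinearMap.mulLeft_mul, hp.eq]
  exact (LinearMap.IsIdempotentElem.isProj_range _ mulLeft_idem).trace.symm

lemma IsQuasiBasis.finrank_range_mulLeft {ι : Type*} [Fintype ι] {τ : A →ₗ[K] K} {u v : ι → A}
    (h : IsQuasiBasis τ u v) (hτ : ∀ x y, τ (x * y) = τ (y * x)) {p : A}
    (hp : IsIdempotentElem p) (hpc : p ∈ Set.center A) :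
    (Module.finrank K (LinearMap.range (LinearMap.mulLeft K p)) : K) =
      τ (p * ∑ i, u i * v i) := by
  have := h.moduleFinite
  have mulLeft_eq : LinearMap.mulLeft K p = LinearMap.mulRight K p :=
    LinearMap.ext fun x ↦ (Semigroup.mem_center_iff.mp hpc x).symm
  rw [finrank_range_mulLeft_eq_trace hp, mulLeft_eq, h.trace_mulRight hτ]

lemma finite_spectrum_of_isIntegral {a : A} (ha : IsIntegral K a) : (spectrum K a).Finite := by
  nontriviality A
  refine (Polynomial.finite_setOfPred_isRoot (minpoly.ne_zero ha)).subset fun c hc ↦ ?_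
  simpa using spectrum.subset_polynomial_aeval a (minpoly K a) ⟨c, hc, rfl⟩

end Field

section Eigenprojection

variable {𝕜 A : Type*} {pred : A → Prop} [RCLike 𝕜] [TopologicalSpace A] [Ring A] [StarRing A]
  [Algebra 𝕜 A] [ContinuousFunctionalCalculus 𝕜 A pred] {a : A} {c : 𝕜}

/-- The spectral projection of `a` at the point `c`. It is meaningful when `c` is isolated in the
spectrum of `a`, that is, when the indicator of `{c}` is continuous there, and `a` satisfies `pred`;
otherwise `cfc` returns the junk value `0`. -/
noncomputable def eigenprojection (a : A) (c : 𝕜) : A :=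
  cfc (({c} : Set 𝕜).indicator 1) a

lemma isStarProjection_eigenprojection
    (hc : ContinuousOn (({c} : Set 𝕜).indicator (1 : 𝕜 → 𝕜)) (spectrum 𝕜 a)) :
    IsStarProjection (eigenprojection a c) where
  isIdempotentElem := by
    rw [IsIdempotentElem, eigenprojection, ← cfc_mul _ _ a hc hc]
    congr 1
    ext x
    by_cases hx : x = c <;> simp [hx]
  isSelfAdjoint := by
    rw [IsSelfAdjoint, eigenprojection, ← cfc_star]
    congr 1
    ext x
    by_cases hx : x = c <;> simp [hx]

lemma eigenprojection_ne_zero (ha : pred a)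
    (hc : ContinuousOn (({c} : Set 𝕜).indicator (1 : 𝕜 → 𝕜)) (spectrum 𝕜 a))
    (hca : c ∈ spectrum 𝕜 a) :
    eigenprojection a c ≠ 0 := by
  intro h
  rw [eigenprojection, ← cfc_zero 𝕜 a] at h
  simpa using eqOn_of_cfc_eq_cfc h hc continuousOn_const ha hca

lemma eigenprojection_mul_self (ha : pred a)
    (hc : ContinuousOn (({c} : Set 𝕜).indicator (1 : 𝕜 → 𝕜)) (spectrum 𝕜 a)) :
    eigenprojection a c * a = c • eigenprojection a c := by
  calc eigenprojection a c * a = eigenprojection a c * cfc id a := by rw [cfc_id 𝕜 a]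
    _ = cfc (fun x ↦ ({c} : Set 𝕜).indicator 1 x * id x) a :=
        (cfc_mul _ _ a hc continuousOn_id).symm
    _ = cfc (fun x ↦ c * ({c} : Set 𝕜).indicator 1 x) a := by
        congr 1
        ext x
        by_cases hx : x = c <;> simp [hx]
    _ = c • eigenprojection a c := cfc_const_mul c _ a hc

lemma eigenprojection_mem_center [IsSemitopologicalRing A] [T2Space A] (ha : a ∈ Set.center A) :
    eigenprojection a c ∈ Set.center A :=
  Semigroup.mem_center_iff.mpr fun x ↦
    (Commute.cfc (Semigroup.mem_center_iff.mp ha x).symm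
      (Semigroup.mem_center_iff.mp (Set.star_mem_center ha) x).symm _).eq.symm

end Eigenprojection

namespace IsMinCentralProjection

variable {A : Type*} [Ring A] [StarRing A] {p : A}

lemma ne_zero (hp : IsMinCentralProjection p) : p ≠ 0 := hp.1

lemma isIdempotentElem (hp : IsMinCentralProjection p) : IsIdempotentElem p := hp.2.1

lemma mem_center (hp : IsMinCentralProjection p) : p ∈ Set.center A :=
  Semigroup.mem_center_iff.mpr fun x ↦ (hp.2.2.2.1 x).symm

end IsMinCentralProjection

lemma eq_of_mul_eq_of_span_le {A : Type*} [Ring A] {p q : A} (hp : IsIdempotentElem p)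
    (hmul : q * p = p) (hle : Ideal.span {q} ≤ Ideal.span {p}) : p = q := by
  obtain ⟨a, rfl⟩ := Ideal.mem_span_singleton'.mp (hle (Ideal.mem_span_singleton_self q))
  exact hmul.symm.trans (by rw [mul_assoc, hp.eq])

lemma exists_isMinCentralProjection_mul_eq {A : Type*} [Ring A] [StarRing A] [IsArtinianRing A]
    {q : A} (hq0 : q ≠ 0) (hq : IsStarProjection q) (hqc : q ∈ Set.center A) :
    ∃ p, IsMinCentralProjection p ∧ p * q = p := by
  let below : Set A := {r | r ≠ 0 ∧ IsStarProjection r ∧ r ∈ Set.center A ∧ r * q = r}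
  obtain ⟨p, ⟨hp0, hp, hpc, hpq⟩, hmin⟩ :=
    (InvImage.wf (fun r : A ↦ Ideal.span {r}) wellFounded_lt).has_min below
      ⟨q, hq0, hq, hqc, hq.isIdempotentElem.eq⟩
  have commute_p (x : A) : p * x = x * p := (Semigroup.mem_center_iff.mp hpc x).symm
  refine ⟨p, ⟨hp0, hp.isIdempotentElem, hp.isSelfAdjoint, commute_p,
    fun r hr hrs hrc hrp ↦ or_iff_not_imp_left.mpr fun hr0 ↦ ?_⟩, hpq⟩
  have hr_below : r ∈ below :=
    ⟨hr0, ⟨hr, hrs⟩, Semigroup.mem_center_iff.mpr fun x ↦ (hrc x).symm,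
      by rw [← hrp, mul_assoc, hpq]⟩
  have hle : Ideal.span {r} ≤ Ideal.span {p} :=
    (Ideal.span_singleton_le_iff_mem _).mpr (Ideal.mem_span_singleton'.mpr ⟨r, hrp⟩)
  exact eq_of_mul_eq_of_span_le hr ((hrc p).symm.trans hrp)
    (not_lt_iff_le_imp_ge.mp (hmin r hr_below) hle)

lemma isStarNormal_of_mem_center {M : Type*} [Semigroup M] [Star M] {a : M}
    (ha : a ∈ Set.center M) : IsStarNormal a :=
  ⟨Semigroup.mem_center_iff.mp ha (star a)⟩

section CStar

variable {P : Type*} [NormedRing P] [StarRing P] [NormedAlgebra ℂ P]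

lemma exists_isMinCentralProjection_mul_eq_smul [CStarRing P] [StarModule ℂ P]
    [FiniteDimensional ℂ P] {z : P} (hz : z ∈ Set.center P) {c : ℂ} (hc : c ∈ spectrum ℂ z) :
    ∃ p, IsMinCentralProjection p ∧ p * z = c • p := by
  have : CompleteSpace P := FiniteDimensional.complete ℂ P
  let _ : CStarAlgebra P := {}
  have : IsArtinianRing P := IsArtinianRing.of_finite ℂ P
  have hnormal : IsStarNormal z := isStarNormal_of_mem_center hz
  have hcont : ContinuousOn (({c} : Set ℂ).indicator (1 : ℂ → ℂ)) (spectrum ℂ z) :=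
    (finite_spectrum_of_isIntegral (Algebra.IsIntegral.isIntegral z)).continuousOn _
  obtain ⟨p, hp, hpq⟩ := exists_isMinCentralProjection_mul_eq
    (eigenprojection_ne_zero hnormal hcont hc) (isStarProjection_eigenprojection hcont)
    (eigenprojection_mem_center hz)
  refine ⟨p, hp, ?_⟩
  calc p * z = p * (eigenprojection z c * z) := by rw [← mul_assoc, hpq]
    _ = c • p := by rw [eigenprojection_mul_self hnormal hcont, mul_smul_comm, hpq]

lemma IsMarkovTrace.apply_ne_zero [FiniteDimensional ℂ P] {τ : P →ₗ[ℂ] ℂ}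
    (hM : IsMarkovTrace τ) {p : P} (hp : IsMinCentralProjection p) : τ p ≠ 0 := by
  intro hτp
  have hrank := hM p hp
  rw [hτp, zero_mul, eq_comm, Nat.cast_eq_zero, Submodule.finrank_eq_zero,
    LinearMap.range_eq_bot, LinearMap.mulLeft_eq_zero_iff] at hrank
  exact hp.ne_zero hrank

namespace IsQuasiBasis

variable {ι : Type*} [Fintype ι] {τ : P →ₗ[ℂ] ℂ} {u v : ι → P}

lemma isMarkovTrace_of_index_eq_smul_one (h : IsQuasiBasis τ u v)
    (hτ : ∀ x y, τ (x * y) = τ (y * x)) (hτ1 : τ 1 = 1) {c : ℂ}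
    (hc : ∑ i, u i * v i = c • 1) : IsMarkovTrace τ := by
  intro p hp
  have finrank_eq : (Module.finrank ℂ P : ℂ) = c := by
    simp [h.finrank_eq_apply_index hτ, hc, hτ1]
  rw [h.finrank_range_mulLeft hτ hp.isIdempotentElem hp.mem_center, hc, finrank_eq]
  simp [mul_comm]

lemma index_eq_finrank_smul_one [CStarRing P] [StarModule ℂ P] (h : IsQuasiBasis τ u v)
    (hτ : ∀ x y, τ (x * y) = τ (y * x)) (hM : IsMarkovTrace τ) :
    ∑ i, u i * v i = (Module.finrank ℂ P : ℂ) • 1 := by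
  have : FiniteDimensional ℂ P := h.moduleFinite
  have : CompleteSpace P := FiniteDimensional.complete ℂ P
  let _ : CStarAlgebra P := {}
  have hcenter := h.index_mem_center hτ
  rw [← Algebra.algebraMap_eq_smul_one]
  refine CFC.eq_algebraMap_of_spectrum_subset_singleton _ _ (fun c hc ↦ ?_)
    (isStarNormal_of_mem_center hcenter)
  obtain ⟨p, hp, hpc⟩ := exists_isMinCentralProjection_mul_eq_smul hcenter hc
  refine mul_left_cancel₀ (hM.apply_ne_zero hp) ?_
  calc τ p * c = τ (p * ∑ i, u i * v i) := by rw [hpc, map_smul, smul_eq_mul, mul_comm]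
    _ = Module.finrank ℂ (LinearMap.range (LinearMap.mulLeft ℂ p)) :=
        (h.finrank_range_mulLeft hτ hp.isIdempotentElem hp.mem_center).symm
    _ = τ p * Module.finrank ℂ P := (hM p hp).symm

end IsQuasiBasis

end CStar

theorem scalar_index_iff_Markov_trace_general {P ι : Type*} [NormedRing P] [StarRing P]
    [CStarRing P] [NormedAlgebra ℂ P] [StarModule ℂ P] [Fintype ι] {τ : P →ₗ[ℂ] ℂ} {u v : ι → P}
    (hτ1 : τ 1 = 1) (hτtracial : ∀ x y, τ (x * y) = τ (y * x)) (h : IsQuasiBasis τ u v) :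
    ((∃ c : ℂ, ∑ i, u i * v i = c • 1) ↔ IsMarkovTrace τ) ∧
    (IsMarkovTrace τ → ∑ i, u i * v i = (Module.finrank ℂ P : ℂ) • 1) :=
  ⟨⟨fun ⟨_, hc⟩ ↦ h.isMarkovTrace_of_index_eq_smul_one hτtracial hτ1 hc,
    fun hM ↦ ⟨_, h.index_eq_finrank_smul_one hτtracial hM⟩⟩,
    h.index_eq_finrank_smul_one hτtracial⟩

/-- for a right quasi-basis `(λ_i)` of a faithful tracial state `τ` on a
nonzero finite-dimensional unital C*-algebra `P`, the element `Σ_i λ_i λ_i*` is a scalar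
iff `τ` is the Markov trace for `ℂ ⊆ P` with modulus `dim_ℂ P`; and in that case
`Σ_i λ_i λ_i* = dim_ℂ(P)·1`. -/
theorem scalar_index_iff_Markov_trace
    (P : Type*) [NormedRing P] [StarRing P] [CStarRing P]
    [NormedAlgebra ℂ P] [StarModule ℂ P] [Nontrivial P] [FiniteDimensional ℂ P]
    (τ : P →ₗ[ℂ] ℂ) (hτ1 : τ 1 = 1)
    (hτpos : ∀ x : P, ∃ r : ℝ, 0 ≤ r ∧ τ (star x * x) = (r : ℂ))
    (hτfaithful : ∀ x : P, τ (star x * x) = 0 → x = 0)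
    (hτtracial : ∀ x y : P, τ (x * y) = τ (y * x))
    (n : ℕ) (l : Fin n → P)
    (hqb : ∀ x : P, x = ∑ i, τ (x * l i) • star (l i)) :
    ((∃ c : ℂ, (∑ i, l i * star (l i)) = c • 1) ↔ IsMarkovTrace τ) ∧
    (IsMarkovTrace τ →
      (∑ i, l i * star (l i)) = ((Module.finrank ℂ P : ℕ) : ℂ) • (1 : P)) :=
  scalar_index_iff_Markov_trace_general hτ1 hτtracial hqb
end

section
/- Let B ⊆ A be an inclusion of unital C*-algebras with common unit such that the center of B equals ℂ·1, and suppose there exists a finite-index conditional expectation E : A → B. Then the generalized Weyl group W(B ⊂ A) = N_A(B)/(U(B)·U(C_A(B))) is a finite group. -/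
/-! If a unitary `u` normalizes `B`, then `E u * b = (u b u*) * E u` for `b ∈ B`, so `(E u)* u`
centralizes `B`, and `(E u)* (E u) = E ((E u)* u)` lies in the center of `B`. By the same argument
for `u*`, both `(E u)* (E u)` and `(E u) (E u)*` are scalars. If `E u ≠ 0`, then `E u` is therefore
a multiple of a unitary `w ∈ B`, and `u = w (w* u) ∈ U(B) U(C_A(B))`. Hence representatives `u_j`
of distinct cosets are orthonormal: `E (u_j* u_k) = δ_{jk}`.

An orthonormal family of `m` unitaries has bounded length. Let `y_i = ∑_j u_j E(u_j* l_i)` be the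
projection of `l_i` onto the span of the `u_j`. The quasi-basis expansion of each `u_j*` gives
`m • 1 = ∑_j u_j u_j* = ∑_i y_i l_i*`. Bessel's inequality bounds `‖E (y_i* y_i)‖` by
`‖E (l_i* l_i)‖`, and by finite index the norm of `A` is dominated by the Hilbert module norm
`‖E (x* x)‖^(1/2)`; so the right-hand side is bounded independently of `m`. -/

namespace RegularInclusion

variable {A : Type*} [NormedRing A] [StarRing A] [CStarRing A] [CompleteSpace A]
  [NormedAlgebra ℂ A] [StarModule ℂ A]

/-- A conditional expectation of `A` onto the subset `B`: a `ℂ`-linear positive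
`B`-bimodular projection of `A` onto `B`. -/
def IsCondExp (B : Set A) (E : A →ₗ[ℂ] A) : Prop :=
  (∀ x, E x ∈ B) ∧ (∀ b ∈ B, E b = b) ∧
  (∀ x, ∃ y, E (star x * x) = star y * y) ∧
  (∀ b₁ ∈ B, ∀ b₂ ∈ B, ∀ x, E (b₁ * x * b₂) = b₁ * E x * b₂)

/-- `l` is a right quasi-basis for `E`, witnessing finite index. -/
def IsRightQB (E : A →ₗ[ℂ] A) {n : ℕ} (l : Fin n → A) : Prop :=
  ∀ x, x = ∑ i, E (x * l i) * star (l i)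

/-- The centralizer (relative commutant) `C_A(B)` of `B` in `A`. -/
def cent (B : Set A) : Set A := {x | ∀ b ∈ B, x * b = b * x}

/-- The normalizer `N_A(B) = {u ∈ U(A) : uBu* = B}` of `B` in `A`. -/
def normalizer (B : Set A) : Set A :=
  {u | u ∈ unitary A ∧ (fun x => u * x * star u) '' B = B}

/-- The set `U(B)` of unitaries of `B`. -/
def UB (B : Set A) : Set A := {b | b ∈ B ∧ b ∈ unitary A}

/-- The set `U(B)·U(C_A(B))` of products of a unitary of `B` and a unitary of
the centralizer of `B`. -/
def UBC (B : Set A) : Set A :=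
  {x | ∃ b c, b ∈ B ∧ b ∈ unitary A ∧ c ∈ cent B ∧ c ∈ unitary A ∧ x = b * c}

/-- Simplicity of the C*-algebra (given as the subset `S` of `A`): the only closed
two-sided ideals of `S` are `{0}` and `S`. -/
def IsSimpleCStar (S : Set A) : Prop :=
  ∀ I : Set A, I ⊆ S → IsClosed I → (0 : A) ∈ I →
    (∀ x ∈ I, ∀ y ∈ I, x + y ∈ I) →
    (∀ x ∈ I, ∀ b ∈ S, x * b ∈ I ∧ b * x ∈ I) →
    I = {0} ∨ I = S

/-- The intermediate C*-subalgebra `C := C*(B ∪ C_A(B))` generated by `B` and the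
centralizer of `B`. -/
def genC (B : Set A) : StarSubalgebra ℂ A :=
  (StarAlgebra.adjoin ℂ (B ∪ cent B)).topologicalClosure

/-- Regularity of the inclusion `B ⊆ A`: the normalizer of `B` generates `A` as a
C*-algebra. -/
def IsRegular (B : Set A) : Prop :=
  (StarAlgebra.adjoin ℂ (normalizer B)).topologicalClosure = ⊤

/-- `E₀` is the minimal conditional expectation of `A` onto `B`: the finite-index
conditional expectation whose (scalar) Watatani index is least among all finite-index
conditional expectations onto `B`. -/
def IsMinimalCondExp (B : Set A) (E₀ : A →ₗ[ℂ] A) : Prop :=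
  IsCondExp B E₀ ∧
  ∃ (r₀ : ℝ) (n : ℕ) (l : Fin n → A), IsRightQB E₀ l ∧
    (∑ i, l i * star (l i)) = (r₀ : ℂ) • 1 ∧
    ∀ E : A →ₗ[ℂ] A, IsCondExp B E → ∀ (m : ℕ) (μ : Fin m → A), IsRightQB E μ →
      ∀ r : ℝ, (∑ i, μ i * star (μ i)) = (r : ℂ) • 1 → r₀ ≤ r

section Star

omit [CompleteSpace A] [CStarRing A] [NormedAlgebra ℂ A] [StarModule ℂ A]

lemma one_mem_normalizer (B : Set A) : 1 ∈ normalizer B :=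
  ⟨one_mem _, by simp⟩

lemma mul_mem_normalizer {B : Set A} {u v : A} (hu : u ∈ normalizer B) (hv : v ∈ normalizer B) :
    u * v ∈ normalizer B := by
  have hcomp : (fun x => u * v * x * star (u * v))
      = (fun x => u * x * star u) ∘ (fun x => v * x * star v) := by
    funext x
    simp [mul_assoc]
  exact ⟨mul_mem hu.1 hv.1, by rw [hcomp, Set.image_comp, hv.2, hu.2]⟩

lemma star_mem_normalizer {B : Set A} {u : A} (hu : u ∈ normalizer B) :
    star u ∈ normalizer B := by
  have hinv : Function.LeftInverse (fun x => star u * x * star (star u))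
      (fun x => u * x * star u) := fun x => by
    have huu := Unitary.star_mul_self_of_mem hu.1
    simp [mul_assoc, huu, ← mul_assoc (star u) u]
  refine ⟨Unitary.star_mem hu.1, ?_⟩
  nth_rw 1 [← hu.2]
  exact hinv.image_image B

lemma conj_mem_of_mem_normalizer {B : Set A} {u b : A} (hu : u ∈ normalizer B) (hb : b ∈ B) :
    u * b * star u ∈ B :=
  hu.2 ▸ Set.mem_image_of_mem _ hb

lemma mul_eq_conj_mul_of_mem_unitary {u : A} (hu : u ∈ unitary A) (b : A) :
    u * b = u * b * star u * u := by
  rw [mul_assoc, Unitary.star_mul_self_of_mem hu, mul_one]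

end Star

omit [CompleteSpace A] [CStarRing A] in
lemma one_mem_UBC (B : StarSubalgebra ℂ A) : 1 ∈ UBC (B : Set A) :=
  ⟨1, 1, one_mem B, one_mem _, fun b _ => by simp, one_mem _, by simp⟩

lemma star_mul_self_eq_norm_sq_smul_one {e : A} {c : ℂ} (h : star e * e = c • (1 : A)) :
    star e * e = (‖e‖ ^ 2) • (1 : A) := by
  let : CStarAlgebra A := {}
  let : PartialOrder A := CStarAlgebra.spectralOrder A
  have : StarOrderedRing A := CStarAlgebra.spectralOrderedRing A
  rcases subsingleton_or_nontrivial A with _ | _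
  · exact Subsingleton.elim _ _
  have hnorm : ‖c‖ = ‖e‖ ^ 2 := by
    rw [sq, ← CStarRing.norm_star_mul_self, h, norm_smul, CStarRing.norm_one, mul_one]
  have hmem : c ∈ spectrum ℂ (star e * e) := by
    rw [h, ← Algebra.algebraMap_eq_smul_one, spectrum.scalar_eq]
    rfl
  have hc : ((‖c‖ : ℝ) : ℂ) = c := by
    open ComplexOrder in
    exact Complex.norm_of_nonneg' (spectrum_nonneg_of_nonneg (star_mul_self_nonneg e) hmem)
  rw [h, ← hnorm, ← Complex.coe_smul, hc]

lemma inv_norm_smul_mem_unitary {e : A} (he : e ≠ 0) {c d : ℂ}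
    (hc : star e * e = c • (1 : A)) (hd : e * star e = d • (1 : A)) :
    ‖e‖⁻¹ • e ∈ unitary A := by
  have hnorm : ‖e‖ ≠ 0 := norm_ne_zero_iff.2 he
  have hleft := star_mul_self_eq_norm_sq_smul_one hc
  have hright : e * star e = (‖e‖ ^ 2) • (1 : A) := by
    simpa using star_mul_self_eq_norm_sq_smul_one (e := star e) (by rwa [star_star])
  have hscalar : ‖e‖⁻¹ * ‖e‖⁻¹ * ‖e‖ ^ 2 = 1 := by field_simp
  rw [Unitary.mem_iff, star_smul, star_trivial, smul_mul_smul_comm, smul_mul_smul_comm, hleft,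
    hright, smul_smul, hscalar, one_smul]
  exact ⟨rfl, rfl⟩

section CondExp

variable {B : StarSubalgebra ℂ A} {E : A →ₗ[ℂ] A}

omit [CompleteSpace A] [CStarRing A] in
lemma IsCondExp.map_mul_right (hE : IsCondExp (B : Set A) E) {b : A} (hb : b ∈ B) (x : A) :
    E (x * b) = E x * b := by
  simpa using hE.2.2.2 1 (one_mem B) b hb x

omit [CompleteSpace A] [CStarRing A] in
lemma IsCondExp.map_mul_left (hE : IsCondExp (B : Set A) E) {b : A} (hb : b ∈ B) (x : A) :
    E (b * x) = b * E x := by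
  simpa using hE.2.2.2 b hb 1 (one_mem B) x

omit [CompleteSpace A] [CStarRing A] [StarModule ℂ A] in
lemma IsCondExp.map_star_mul_self_nonneg [PartialOrder A] [StarOrderedRing A] {S : Set A}
    (hE : IsCondExp S E) (x : A) : 0 ≤ E (star x * x) := by
  obtain ⟨y, hy⟩ := hE.2.2.1 x
  exact hy ▸ star_mul_self_nonneg y

lemma IsCondExp.map_star {S : Set A} (hE : IsCondExp S E) (x : A) : E (star x) = star (E x) := by
  let : CStarAlgebra A := {}
  let : PartialOrder A := CStarAlgebra.spectralOrder A
  have : StarOrderedRing A := CStarAlgebra.spectralOrderedRing A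
  have hpos : ∀ a, 0 ≤ a → 0 ≤ E a := fun a ha => by
    obtain ⟨y, rfl⟩ := CStarAlgebra.nonneg_iff_eq_star_mul_self.1 ha
    exact hE.map_star_mul_self_nonneg y
  exact StarHomClass.map_star (PositiveLinearMap.mk₀ E hpos) x

lemma IsCondExp.star_map_star_mul {S : Set A} (hE : IsCondExp S E) (x y : A) :
    star (E (star x * y)) = E (star y * x) := by
  rw [← hE.map_star, star_mul, star_star]

omit [CompleteSpace A] [CStarRing A] in
lemma IsCondExp.map_mem_cent (hE : IsCondExp (B : Set A) E) {x : A} (hx : x ∈ cent (B : Set A)) :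
    E x ∈ cent (B : Set A) := fun b hb => by
  rw [← hE.map_mul_right hb, hx b hb, hE.map_mul_left hb]

omit [CompleteSpace A] [CStarRing A] in
lemma IsCondExp.map_mul_eq_conj_mul_map (hE : IsCondExp (B : Set A) E) {u b : A}
    (hu : u ∈ normalizer (B : Set A)) (hb : b ∈ B) : E u * b = u * b * star u * E u := by
  rw [← hE.map_mul_right hb, ← hE.map_mul_left (conj_mem_of_mem_normalizer hu hb),
    ← mul_eq_conj_mul_of_mem_unitary hu.1]

omit [CompleteSpace A] [CStarRing A] in
lemma IsCondExp.star_map_mul_mem_cent (hE : IsCondExp (B : Set A) E) {u : A}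
    (hu : u ∈ normalizer (B : Set A)) : star (E u) * u ∈ cent (B : Set A) := fun b hb => by
  have hadj : star (E u) * (u * b * star u) = b * star (E u) := by
    simpa [mul_assoc] using
      (congrArg star (hE.map_mul_eq_conj_mul_map hu (star_mem hb : star b ∈ B))).symm
  calc star (E u) * u * b = star (E u) * (u * b * star u) * u := by
        rw [mul_assoc _ _ u, ← mul_eq_conj_mul_of_mem_unitary hu.1, mul_assoc]
    _ = b * (star (E u) * u) := by rw [hadj, mul_assoc]

omit [CompleteSpace A] [CStarRing A] in
lemma IsCondExp.star_map_mul_map_mem_cent (hE : IsCondExp (B : Set A) E) {u : A}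
    (hu : u ∈ normalizer (B : Set A)) : star (E u) * E u ∈ cent (B : Set A) := by
  rw [← hE.map_mul_left (star_mem (hE.1 u))]
  exact hE.map_mem_cent (hE.star_map_mul_mem_cent hu)

lemma IsCondExp.mem_UBC_of_map_ne_zero (hE : IsCondExp (B : Set A) E)
    (hZB : ∀ z ∈ (B : Set A), (∀ x ∈ (B : Set A), z * x = x * z) → ∃ c : ℂ, z = c • (1 : A))
    {u : A} (hu : u ∈ normalizer (B : Set A)) (hne : E u ≠ 0) : u ∈ UBC (B : Set A) := by
  have hEu : E u ∈ B := hE.1 u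
  obtain ⟨c, hc⟩ := hZB _ (mul_mem (star_mem hEu) hEu) (hE.star_map_mul_map_mem_cent hu)
  have hcent : E u * star (E u) ∈ cent (B : Set A) := by
    simpa only [hE.map_star, star_star] using
      hE.star_map_mul_map_mem_cent (star_mem_normalizer hu)
  obtain ⟨d, hd⟩ := hZB _ (mul_mem hEu (star_mem hEu)) hcent
  set w := ‖E u‖⁻¹ • E u with hw
  have hwU : w ∈ unitary A := inv_norm_smul_mem_unitary hne hc hd
  refine ⟨w, star w * u, ?_, hwU, fun b hb => ?_, mul_mem (Unitary.star_mem hwU) hu.1, ?_⟩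
  · rw [hw, ← Complex.coe_smul]
    exact B.smul_mem hEu _
  · rw [hw, star_smul, star_trivial, smul_mul_assoc, smul_mul_assoc, mul_smul_comm,
      hE.star_map_mul_mem_cent hu b hb]
  · rw [← mul_assoc, Unitary.mul_star_self_of_mem hwU, one_mul]

lemma IsCondExp.star_map_mul_map_le [PartialOrder A] [StarOrderedRing A]
    (hE : IsCondExp (B : Set A) E) (x y : A) {K : ℝ} (hK : 0 < K)
    (hy : ‖E (star y * y)‖ ≤ K) :
    star (E (star y * x)) * E (star y * x) ≤ K • E (star x * x) := by
  let : CStarAlgebra A := {}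
  set w := E (star y * x) with hw
  have hwB : w ∈ B := hE.1 _
  have hconj : star w * E (star y * y) * w ≤ K • (star w * w) :=
    (CStarAlgebra.star_left_conjugate_le_norm_smul
      (.of_nonneg (hE.map_star_mul_self_nonneg y))).trans
      (smul_le_smul_of_nonneg_right hy (star_mul_self_nonneg w))
  have hexpand : E (star (K • x - y * w) * (K • x - y * w))
      = K • K • E (star x * x) - (2 * K) • (star w * w) + star w * E (star y * y) * w := by
    have hmul : star (K • x - y * w) * (K • x - y * w)
        = K • K • (star x * x) - K • (star x * y * w) - K • (star w * (star y * x))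
          + star w * (star y * y) * w := by
      simp only [star_sub, star_smul, star_trivial, star_mul, sub_mul, mul_sub, smul_mul_assoc,
        mul_smul_comm, mul_assoc]
      module
    rw [hmul]
    simp only [map_add, map_sub, LinearMap.map_smul_of_tower, hE.map_mul_right hwB,
      hE.map_mul_left (star_mem hwB), ← hw, ← hE.star_map_star_mul y x]
    module
  have hnonneg : 0 ≤ K • (K • E (star x * x) - star w * w) :=
    calc 0 ≤ E (star (K • x - y * w) * (K • x - y * w)) := hE.map_star_mul_self_nonneg _
      _ ≤ K • K • E (star x * x) - (2 * K) • (star w * w) + K • (star w * w) := by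
        rw [hexpand]
        gcongr
      _ = K • (K • E (star x * x) - star w * w) := by module
  exact sub_nonneg.1 (nonneg_of_smul_nonneg_of_pos_left hnonneg hK)

/-- The Hilbert module norm of the `B`-valued inner product `E (x* y)`; it is only a seminorm
unless `E` is faithful. -/
noncomputable def moduleNorm (E : A →ₗ[ℂ] A) (x : A) : ℝ := √‖E (star x * x)‖

omit [CompleteSpace A] [CStarRing A] [StarModule ℂ A] in
lemma moduleNorm_nonneg (E : A →ₗ[ℂ] A) (x : A) : 0 ≤ moduleNorm E x :=
  Real.sqrt_nonneg _

lemma IsCondExp.norm_map_star_mul_le (hE : IsCondExp (B : Set A) E) (x y : A) :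
    ‖E (star x * y)‖ ≤ moduleNorm E x * moduleNorm E y := by
  let : CStarAlgebra A := {}
  let : PartialOrder A := CStarAlgebra.spectralOrder A
  have : StarOrderedRing A := CStarAlgebra.spectralOrderedRing A
  rw [moduleNorm, moduleNorm, ← Real.sqrt_mul (norm_nonneg _)]
  refine Real.le_sqrt_of_sq_le (le_mul_of_forall_lt₀ fun K hK L hL => ?_)
  have hKpos : 0 < K := (norm_nonneg _).trans_lt hK
  calc ‖E (star x * y)‖ ^ 2 = ‖star (E (star x * y)) * E (star x * y)‖ := by
        rw [CStarRing.norm_star_mul_self, sq]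
    _ ≤ ‖K • E (star y * y)‖ :=
        CStarAlgebra.norm_le_norm_of_nonneg_of_le (star_mul_self_nonneg _)
          (hE.star_map_mul_map_le y x hKpos hK.le)
    _ ≤ K * L := by
        rw [norm_smul, Real.norm_of_nonneg hKpos.le]
        gcongr

lemma IsRightQB.norm_le {n : ℕ} {l : Fin n → A} (hl : IsRightQB E l)
    (hE : IsCondExp (B : Set A) E) (x : A) :
    ‖x‖ ≤ moduleNorm E x * ∑ i, moduleNorm E (l i) * ‖l i‖ := by
  calc ‖x‖ = ‖∑ i, E (star x * l i) * star (l i)‖ := by rw [← hl (star x), norm_star]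
    _ ≤ ∑ i, ‖E (star x * l i)‖ * ‖l i‖ :=
        norm_sum_le_of_le _ fun i _ => (norm_mul_le _ _).trans_eq (by rw [norm_star])
    _ ≤ ∑ i, moduleNorm E x * moduleNorm E (l i) * ‖l i‖ := by
        gcongr
        exact hE.norm_map_star_mul_le _ _
    _ = moduleNorm E x * ∑ i, moduleNorm E (l i) * ‖l i‖ := by
        simp only [Finset.mul_sum, mul_assoc]

end CondExp

section Orthonormal

variable {B : StarSubalgebra ℂ A} {E : A →ₗ[ℂ] A} {ι : Type*}

/-- Orthonormality with respect to the `B`-valued inner product `E (x* y)`. -/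
def IsOrthonormal (E : A →ₗ[ℂ] A) (u : ι → A) : Prop :=
  (∀ j, E (star (u j) * u j) = 1) ∧ Pairwise fun j k => E (star (u j) * u k) = 0

variable [Fintype ι] {u : ι → A}

/-- The projection onto the right `B`-module spanned by `u`, when `u` is orthonormal. -/
noncomputable def orthoProj (E : A →ₗ[ℂ] A) (u : ι → A) (x : A) : A :=
  ∑ j, u j * E (star (u j) * x)

omit [CompleteSpace A] [CStarRing A] in
lemma IsOrthonormal.map_star_mul_orthoProj (hu : IsOrthonormal E u)
    (hE : IsCondExp (B : Set A) E) (j : ι) (x : A) :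
    E (star (u j) * orthoProj E u x) = E (star (u j) * x) := by
  have hterm : ∀ k, E (star (u j) * (u k * E (star (u k) * x)))
      = E (star (u j) * u k) * E (star (u k) * x) := fun k => by
    rw [← mul_assoc, hE.map_mul_right (hE.1 _)]
  rw [orthoProj, Finset.mul_sum, map_sum, Finset.sum_eq_single j]
  · rw [hterm, hu.1, one_mul]
  · intro k _ hkj
    rw [hterm, hu.2 hkj.symm, zero_mul]
  · simp

omit [CompleteSpace A] [CStarRing A] in
lemma IsCondExp.map_star_orthoProj_mul (hE : IsCondExp (B : Set A) E) (x y : A) :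
    E (star (orthoProj E u x) * y)
      = ∑ j, star (E (star (u j) * x)) * E (star (u j) * y) := by
  simp only [orthoProj, star_sum, star_mul, Finset.sum_mul, map_sum, mul_assoc]
  exact Finset.sum_congr rfl fun j _ => hE.map_mul_left (star_mem (hE.1 _)) _

lemma IsOrthonormal.moduleNorm_orthoProj_le (hu : IsOrthonormal E u)
    (hE : IsCondExp (B : Set A) E) (x : A) :
    moduleNorm E (orthoProj E u x) ≤ moduleNorm E x := by
  set y := orthoProj E u x with hy
  have hyy : E (star y * y) = E (star y * x) := by
    simp only [hy, hE.map_star_orthoProj_mul, hu.map_star_mul_orthoProj hE]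
  have hsq : moduleNorm E y * moduleNorm E y ≤ moduleNorm E y * moduleNorm E x :=
    calc moduleNorm E y * moduleNorm E y = ‖E (star y * x)‖ := by
          rw [moduleNorm, Real.mul_self_sqrt (norm_nonneg _), hyy]
      _ ≤ moduleNorm E y * moduleNorm E x := hE.norm_map_star_mul_le y x
  rcases (moduleNorm_nonneg E y).eq_or_lt with hzero | hpos
  · exact hzero.symm.trans_le (moduleNorm_nonneg E x)
  · exact le_of_mul_le_mul_left hsq hpos

omit [CompleteSpace A] [CStarRing A] [StarModule ℂ A] in
lemma IsRightQB.sum_mul_star_eq_sum_orthoProj {n : ℕ} {l : Fin n → A} (hl : IsRightQB E l) :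
    ∑ j, u j * star (u j) = ∑ i, orthoProj E u (l i) * star (l i) := by
  calc ∑ j, u j * star (u j) = ∑ j, u j * ∑ i, E (star (u j) * l i) * star (l i) := by
        simp only [← hl (star _)]
    _ = ∑ i, orthoProj E u (l i) * star (l i) := by
        simp only [orthoProj, Finset.mul_sum, Finset.sum_mul, mul_assoc]
        exact Finset.sum_comm

lemma IsOrthonormal.norm_sum_mul_star_le (hu : IsOrthonormal E u)
    (hE : IsCondExp (B : Set A) E) {n : ℕ} {l : Fin n → A} (hl : IsRightQB E l) :
    ‖∑ j, u j * star (u j)‖ ≤ (∑ i, moduleNorm E (l i) * ‖l i‖) ^ 2 := by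
  set C := ∑ i, moduleNorm E (l i) * ‖l i‖ with hC
  have hC0 : 0 ≤ C :=
    Finset.sum_nonneg fun i _ => mul_nonneg (moduleNorm_nonneg E _) (norm_nonneg _)
  rw [hl.sum_mul_star_eq_sum_orthoProj]
  calc ‖∑ i, orthoProj E u (l i) * star (l i)‖ ≤ ∑ i, ‖orthoProj E u (l i)‖ * ‖l i‖ :=
        norm_sum_le_of_le _ fun i _ => (norm_mul_le _ _).trans_eq (by rw [norm_star])
    _ ≤ ∑ i, moduleNorm E (l i) * C * ‖l i‖ := by
        gcongr with i
        refine (hl.norm_le hE _).trans ?_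
        gcongr
        exact hu.moduleNorm_orthoProj_le hE _
    _ = C ^ 2 := by
        simp only [mul_right_comm _ C, ← Finset.sum_mul, ← hC, sq]

lemma IsOrthonormal.card_le [Nontrivial A] (hu : IsOrthonormal E u)
    (huU : ∀ j, u j ∈ unitary A) (hE : IsCondExp (B : Set A) E) {n : ℕ} {l : Fin n → A}
    (hl : IsRightQB E l) :
    (Fintype.card ι : ℝ) ≤ (∑ i, moduleNorm E (l i) * ‖l i‖) ^ 2 := by
  have hsum : ∑ j, u j * star (u j) = (Fintype.card ι : ℝ) • (1 : A) := by
    simp [Unitary.mul_star_self_of_mem (huU _), Nat.cast_smul_eq_nsmul]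
  simpa [hsum, norm_smul] using hu.norm_sum_mul_star_le hE hl

end Orthonormal

/-- if `B ⊆ A` has `Z(B) = ℂ·1` and there is a finite-index conditional
expectation `E : A → B`, then the generalized Weyl group
`W(B ⊂ A) = N_A(B)/(U(B)·U(C_A(B)))` is finite, i.e. there are finitely many cosets. -/
theorem generalized_Weyl_group_finite
    (B : StarSubalgebra ℂ A) (hBclosed : IsClosed (B : Set A))
    (hZB : ∀ z ∈ (B : Set A), (∀ x ∈ (B : Set A), z * x = x * z) → ∃ c : ℂ, z = c • (1 : A))
    (E : A →ₗ[ℂ] A) (hE : IsCondExp (B : Set A) E)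
    (n : ℕ) (l : Fin n → A) (hl : IsRightQB E l) :
    ∃ (m : ℕ) (u : Fin m → A),
      (∀ i, u i ∈ normalizer (B : Set A)) ∧
      (∀ v ∈ normalizer (B : Set A), ∃ i, star (u i) * v ∈ UBC (B : Set A)) := by
  rcases subsingleton_or_nontrivial A with _ | _
  · exact ⟨1, fun _ => 1, fun _ => one_mem_normalizer _, fun v _ =>
      ⟨0, Subsingleton.elim 1 (star 1 * v) ▸ one_mem_UBC B⟩⟩
  by_contra! hcosets
  let Orth (x y : A) : Prop := E (star x * y) = 0
  have : Std.Symm Orth := ⟨fun x y (hxy : E (star x * y) = 0) =>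
    (hE.star_map_star_mul x y).symm.trans (by rw [hxy, star_zero])⟩
  obtain ⟨u, huN, horth⟩ : ∃ u : ℕ → A,
      (∀ j, u j ∈ normalizer (B : Set A)) ∧ Pairwise (Function.onFun Orth u) := by
    refine exists_seq_of_forall_finset_exists' _ _ fun s hs => ?_
    obtain ⟨v, hv, hnew⟩ := hcosets s.card (fun i => s.equivFin.symm i) fun i => hs _ (by simp)
    refine ⟨v, hv, fun x hx => of_not_not fun hne => hnew (s.equivFin ⟨x, hx⟩) ?_⟩
    simpa using hE.mem_UBC_of_map_ne_zero hZB
      (mul_mem_normalizer (star_mem_normalizer (hs x hx)) hv) hne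
  obtain ⟨m, hm⟩ := exists_nat_gt ((∑ i, moduleNorm E (l i) * ‖l i‖) ^ 2)
  have honb : IsOrthonormal E fun j : Fin m => u j := by
    refine ⟨fun j => ?_, fun j k hjk => horth (Fin.val_injective.ne hjk)⟩
    rw [Unitary.star_mul_self_of_mem (huN j).1, hE.2.1 1 (one_mem B)]
  have hcard := honb.card_le (fun j => (huN j).1) hE hl
  rw [Fintype.card_fin] at hcard
  exact hm.not_ge hcard

end RegularInclusion
end
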